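/- As T → 0⁺, the quantity m_μ(T) := (1/(4πμ)) ∫_{ℝ³} (1/K_{T,μ}(p) − 1/|p|²) dp satisfies m_μ(T) = μ^{−1/2}(ln(μ/T) + γ − 2 + ln(8/π) + o(1)), where K_{T,μ}(p) = |p|² − μ)·coth((|p|² − μ)/(2T)) in the sense K_{T,μ}(p) = (|p|² − μ)(e^{(|p|²−μ)/T} + 1)/(e^{(|p|²−μ)/T} − 1), γ is Euler's constant. -/

import Mathlib

open Real Filter MeasureTheory

noncomputable def KTmu (T μ : ℝ) (p : EuclideanSpace ℝ (Fin 3)) : ℝ :=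
  if ‖p‖ ^ 2 = μ then 2 * T
  else (‖p‖ ^ 2 - μ) * (Real.exp ((‖p‖ ^ 2 - μ) / T) + 1)
        / (Real.exp ((‖p‖ ^ 2 - μ) / T) - 1)

noncomputable def mμ (μ T : ℝ) : ℝ :=
  (1 / (4 * Real.pi * μ)) *
    ∫ p : EuclideanSpace ℝ (Fin 3), (1 / KTmu T μ p - 1 / ‖p‖ ^ 2)

lemma int_sub_fun {f g : ℝ → ℝ} {s : Set ℝ} (hf : IntegrableOn f s) (hg : IntegrableOn g s) :
    IntegrableOn (fun x => f x - g x) s := hf.sub hg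

lemma int_add_fun {f g : ℝ → ℝ} {s : Set ℝ} (hf : IntegrableOn f s) (hg : IntegrableOn g s) :
    IntegrableOn (fun x => f x + g x) s := hf.add hg

lemma frul_bound {a b x : ℝ} (hab : a ≤ b) (hx : 0 < x) :
    |(exp (-a * x) - exp (-b * x)) / x| ≤ (b - a) * exp (-a * x) := by
  have h1 : exp (-b * x) ≤ exp (-a * x) := by
    apply exp_le_exp.mpr; nlinarith
  have h2 : exp (-b * x) = exp (-a * x) * exp (-((b - a) * x)) := by
    rw [← exp_add]; congr 1; ring
  have h3 := add_one_le_exp (-((b - a) * x))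
  rw [abs_of_nonneg (div_nonneg (by linarith) hx.le), div_le_iff₀ hx, h2]
  nlinarith [exp_pos (-a * x)]

lemma frul {a b : ℝ} (ha : 0 < a) (hab : a ≤ b) :
    IntegrableOn (fun x => (exp (-a * x) - exp (-b * x)) / x) (Set.Ioi 0) ∧
    ∫ x in Set.Ioi 0, (exp (-a * x) - exp (-b * x)) / x = log (b / a) := by
  have hint : IntegrableOn (fun x => (exp (-a * x) - exp (-b * x)) / x) (Set.Ioi 0) := by
    refine Integrable.mono' ((exp_neg_integrableOn_Ioi 0 ha).const_mul (b - a)) ?_ ?_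
    · exact Measurable.aestronglyMeasurable (by fun_prop)
    · filter_upwards [ae_restrict_mem measurableSet_Ioi] with x hx
      exact frul_bound hab hx
  refine ⟨hint, ?_⟩
  have := Frullani.integral_Ioi_eq (f := fun x : ℝ => exp (-x)) (a := a) (b := b) (L := 1) (R := 0)
    ((by fun_prop : Continuous fun x : ℝ => exp (-x)).locallyIntegrable.locallyIntegrableOn _)
    ha (ha.trans_le hab)
    (by
      have : Continuous fun x : ℝ => exp (-x) := by fun_prop
      simpa using (this.tendsto 0).mono_left nhdsWithin_le_nhds)
    (tendsto_exp_neg_atTop_nhds_zero)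
    (by
      refine hint.congr_fun (fun x _ => ?_) measurableSet_Ioi
      simp [div_eq_inv_mul])
  rw [sub_zero, smul_eq_mul, mul_one] at this
  rw [← this]
  refine setIntegral_congr_fun measurableSet_Ioi (fun x _ => ?_)
  simp [div_eq_inv_mul]

noncomputable def qf (x : ℝ) : ℝ := (exp x - 1)⁻¹ - exp (-x) / x

lemma qf_bound {x : ℝ} (hx : 0 < x) : 0 ≤ qf x ∧ qf x ≤ exp (-x) := by
  unfold qf
  have h1 := add_one_le_exp x
  have h2 := add_one_le_exp (-x)
  have e : exp x * exp (-x) = 1 := by rw [← exp_add]; simp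
  have p := exp_pos x
  have p' := exp_pos (-x)
  have hE : 0 < exp x - 1 := by linarith
  have e2 : (exp x - 1)⁻¹ = exp (-x) + exp (-x) * (exp x - 1)⁻¹ := by
    field_simp; linarith
  constructor
  · rw [sub_nonneg, div_le_iff₀ hx, ← div_eq_inv_mul, le_div_iff₀ hE]
    nlinarith
  · have : (exp x - 1)⁻¹ ≤ x⁻¹ := by
      apply inv_anti₀ hx; linarith
    rw [e2, div_eq_mul_inv]
    nlinarith

lemma qf_meas : Measurable qf := by unfold qf; fun_prop

lemma qf_int : IntegrableOn qf (Set.Ioi 0) := by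
  refine Integrable.mono' (integrableOn_exp_neg_Ioi 0) qf_meas.aestronglyMeasurable ?_
  filter_upwards [ae_restrict_mem measurableSet_Ioi] with x hx
  rw [norm_eq_abs, abs_of_nonneg (qf_bound hx).1]
  exact (qf_bound hx).2

lemma qfn_int (n : ℕ) : IntegrableOn (fun x => qf x * (1 - exp (-(n:ℝ) * x))) (Set.Ioi 0) ∧
    ∫ x in Set.Ioi 0, qf x * (1 - exp (-(n:ℝ) * x)) = eulerMascheroniSeq n := by
  induction n with
  | zero => simp [eulerMascheroniSeq]
  | succ n ih =>
    have hn : (0:ℝ) < n + 1 := by positivity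
    have f := frul hn (show (n:ℝ) + 1 ≤ n + 2 by linarith)
    have e := exp_neg_integrableOn_Ioi 0 hn
    have key : Set.EqOn (fun x => qf x * (1 - exp (-((n + 1 : ℕ) : ℝ) * x)))
        (fun x => qf x * (1 - exp (-(n:ℝ) * x)) +
          (exp (-((n:ℝ) + 1) * x) - (exp (-((n:ℝ) + 1) * x) - exp (-((n:ℝ) + 2) * x)) / x))
        (Set.Ioi 0) := by
      intro x hx
      have hx : 0 < x := hx
      have h1 := add_one_le_exp x
      have hE : exp x - 1 ≠ 0 := by linarith
      have e1 : exp (-((n:ℝ) + 1) * x) = exp (-(n:ℝ) * x) * exp (-x) := by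
        rw [← exp_add]; congr 1; ring
      have e2 : exp (-((n:ℝ) + 2) * x) = exp (-(n:ℝ) * x) * exp (-x) * exp (-x) := by
        rw [← exp_add, ← exp_add]; congr 1; ring
      have e3 : (exp x - 1)⁻¹ = exp (-x) / (1 - exp (-x)) := by
        have e : exp x * exp (-x) = 1 := by rw [← exp_add]; simp
        have : 1 - exp (-x) ≠ 0 := by
          have : exp (-x) < 1 := by simpa using hx
          linarith
        field_simp; linarith
      have : 1 - exp (-x) ≠ 0 := by
        have : exp (-x) < 1 := by simpa using hx
        linarith
      simp only [qf]
      push_cast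
      rw [e1, e2, e3]
      field_simp
      ring
    have i2 := int_sub_fun e f.1
    refine ⟨(ih.1.add i2).congr_fun key.symm measurableSet_Ioi, ?_⟩
    rw [setIntegral_congr_fun measurableSet_Ioi key, integral_add ih.1 i2, ih.2, integral_sub e f.1, f.2,
      integral_exp_mul_Ioi (by linarith)]
    simp only [eulerMascheroniSeq, harmonic_succ]
    push_cast
    rw [log_div (by positivity) (by positivity)]
    have : (n:ℝ) + 1 + 1 = n + 2 := by ring
    rw [this]; simp
    rw [show (-1:ℝ) + -(n:ℝ) = -(n + 1) by ring, neg_div_neg_eq, one_div]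
    ring

lemma qf_integral : ∫ x in Set.Ioi 0, qf x = eulerMascheroniConstant := by
  refine tendsto_nhds_unique ?_ tendsto_eulerMascheroniSeq
  refine Tendsto.congr (fun n => (qfn_int n).2) ?_
  refine tendsto_integral_of_dominated_convergence qf (fun n => (qfn_int n).1.aestronglyMeasurable)
    qf_int (fun n => ?_) ?_
  · filter_upwards [ae_restrict_mem measurableSet_Ioi] with x hx
    have hx' : 0 < x := hx
    have : exp (-(n:ℝ) * x) ≤ 1 := by simp; positivity
    have p := exp_pos (-(n:ℝ) * x)
    rw [norm_eq_abs, abs_of_nonneg (mul_nonneg (qf_bound hx).1 (by linarith))]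
    nlinarith [(qf_bound hx).1]
  · filter_upwards [ae_restrict_mem measurableSet_Ioi] with x hx
    have hx' : 0 < x := hx
    have : Tendsto (fun n : ℕ => exp (-(n:ℝ) * x)) atTop (nhds 0) := by
      have := tendsto_exp_neg_atTop_nhds_zero.comp
        ((tendsto_natCast_atTop_atTop (R := ℝ)).atTop_mul_const hx')
      refine this.congr (fun n => ?_)
      simp
    simpa using (this.const_sub 1).const_mul (qf x)

noncomputable def rf (x : ℝ) : ℝ := (exp (-x) - 2 * exp (-x) / (1 + exp (-x))) / x

lemma rf_bound {x : ℝ} (hx : 0 < x) : |rf x| ≤ exp (-x) := by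
  have p := exp_pos (-x)
  have h2 := add_one_le_exp (-x)
  have h3 : exp (-x) < 1 := by simpa using hx
  have : rf x = -(exp (-x) * (1 - exp (-x)) / ((1 + exp (-x)) * x)) := by
    unfold rf; field_simp; ring
  rw [this, abs_neg, abs_of_nonneg (div_nonneg (by nlinarith) (by positivity)),
    div_le_iff₀ (by positivity)]
  have : 1 - exp (-x) ≤ (1 + exp (-x)) * x := by nlinarith
  nlinarith

lemma rf_meas : Measurable rf := by unfold rf; fun_prop

lemma rf_int : IntegrableOn rf (Set.Ioi 0) := by
  refine Integrable.mono' (integrableOn_exp_neg_Ioi 0) rf_meas.aestronglyMeasurable ?_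
  filter_upwards [ae_restrict_mem measurableSet_Ioi] with x hx
  exact rf_bound hx

lemma rfn_int (n : ℕ) : IntegrableOn (fun x => rf x * (1 - exp (-(2 * n:ℝ) * x))) (Set.Ioi 0) ∧
    ∫ x in Set.Ioi 0, rf x * (1 - exp (-(2 * n:ℝ) * x)) = - log (Wallis.W n) := by
  induction n with
  | zero => simp [Wallis.W]
  | succ n ih =>
    have hn : (0:ℝ) < 2 * n + 1 := by positivity
    have hn2 : (0:ℝ) < 2 * n + 2 := by positivity
    have f := frul hn (show 2 * (n:ℝ) + 1 ≤ 2 * n + 2 by linarith)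
    have e := frul hn2 (show 2 * (n:ℝ) + 2 ≤ 2 * n + 3 by linarith)
    have key : Set.EqOn (fun x => rf x * (1 - exp (-(2 * (n + 1 : ℕ) : ℝ) * x)))
        (fun x => rf x * (1 - exp (-(2 * n:ℝ) * x)) +
          ((exp (-(2 * (n:ℝ) + 2) * x) - exp (-(2 * (n:ℝ) + 3) * x)) / x -
            (exp (-(2 * (n:ℝ) + 1) * x) - exp (-(2 * (n:ℝ) + 2) * x)) / x))
        (Set.Ioi 0) := by
      intro x hx
      have hx : 0 < x := hx
      have e1 : exp (-(2 * (n:ℝ) + 1) * x) = exp (-(2 * (n:ℝ)) * x) * exp (-x) := by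
        rw [← exp_add]; congr 1; ring
      have e2 : exp (-(2 * (n:ℝ) + 2) * x) = exp (-(2 * (n:ℝ)) * x) * exp (-x) * exp (-x) := by
        rw [← exp_add, ← exp_add]; congr 1; ring
      have e3 : exp (-(2 * (n:ℝ) + 3) * x)
          = exp (-(2 * (n:ℝ)) * x) * exp (-x) * exp (-x) * exp (-x) := by
        rw [← exp_add, ← exp_add, ← exp_add]; congr 1; ring
      have e4 : 2 * ((n:ℝ) + 1) = 2 * n + 2 := by ring
      have p := exp_pos (-x)
      simp only [rf]
      push_cast
      rw [e4, e1, e2, e3]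
      field_simp
      ring
    have i2 := int_sub_fun e.1 f.1
    refine ⟨(ih.1.add i2).congr_fun key.symm measurableSet_Ioi, ?_⟩
    rw [setIntegral_congr_fun measurableSet_Ioi key, integral_add ih.1 i2, ih.2,
      integral_sub e.1 f.1, f.2, e.2, Wallis.W_succ, log_mul (Wallis.W_pos n).ne' (by positivity),
      log_mul (by positivity) (by positivity), log_div (by positivity) (by positivity),
      log_div (by positivity) (by positivity), log_div (by positivity) (by positivity)]
    ring

lemma rf_integral : ∫ x in Set.Ioi 0, rf x = log (2 / π) := by
  have : log (2 / π) = - log (π / 2) := by rw [← log_inv, inv_div]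
  rw [this]
  refine tendsto_nhds_unique ?_
    ((Wallis.tendsto_W_nhds_pi_div_two.log (by positivity)).neg)
  refine Tendsto.congr (fun n => (rfn_int n).2) ?_
  refine tendsto_integral_of_dominated_convergence (fun x => |rf x|)
    (fun n => (rfn_int n).1.aestronglyMeasurable)
    rf_int.abs (fun n => ?_) ?_
  · filter_upwards [ae_restrict_mem measurableSet_Ioi] with x hx
    have hx' : 0 < x := hx
    have : exp (-(2 * n:ℝ) * x) ≤ 1 := by simp; positivity
    have p := exp_pos (-(2 * n:ℝ) * x)
    rw [norm_eq_abs, abs_mul, abs_of_nonneg (by linarith : 0 ≤ 1 - exp (-(2 * n:ℝ) * x))]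
    nlinarith [abs_nonneg (rf x)]
  · filter_upwards [ae_restrict_mem measurableSet_Ioi] with x hx
    have hx' : 0 < 2 * x := by simpa using hx
    have : Tendsto (fun n : ℕ => exp (-(2 * n:ℝ) * x)) atTop (nhds 0) := by
      have := tendsto_exp_neg_atTop_nhds_zero.comp
        ((tendsto_natCast_atTop_atTop (R := ℝ)).atTop_mul_const hx')
      refine this.congr (fun n => ?_)
      simp; ring
    simpa using (this.const_sub 1).const_mul (rf x)

noncomputable def Lf (x : ℝ) : ℝ := log (x / (1 - exp (-x)))

lemma one_sub_exp_pos {x : ℝ} (hx : 0 < x) : 0 < 1 - exp (-x) := by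
  have : exp (-x) < 1 := by simpa using hx
  linarith

lemma hx_inv {x : ℝ} (hx : 0 < x) : exp (-x) / (1 - exp (-x)) = (exp x - 1)⁻¹ := by
  have h := one_sub_exp_pos hx
  have h1 := add_one_le_exp x
  have hE : exp x - 1 ≠ 0 := by linarith
  have e : exp x * exp (-x) = 1 := by rw [← exp_add]; simp
  field_simp; linarith

lemma Lf_deriv {x : ℝ} (hx : 0 < x) : HasDerivAt Lf (1 / x - (exp x - 1)⁻¹) x := by
  have h := one_sub_exp_pos hx
  have h1 : HasDerivAt (fun x : ℝ => 1 - exp (-x)) (exp (-x)) x := by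
    simpa using ((hasDerivAt_neg x).exp).const_sub 1
  have h2 := ((hasDerivAt_id x).div h1 h.ne').log (div_pos hx h).ne'
  refine h2.congr_deriv ?_
  rw [← hx_inv hx]
  simp only [id, Pi.div_apply]
  field_simp

lemma Lf_zero : Lf 0 = 0 := by simp [Lf]

lemma Lf_cont : ContinuousWithinAt Lf (Set.Ici 0) 0 := by
  have h1 : HasDerivAt (fun x : ℝ => 1 - exp (-x)) 1 0 := by
    simpa using ((hasDerivAt_neg (0:ℝ)).exp).const_sub 1
  have h2 := h1.tendsto_slope_zero
  have h3 : Tendsto Lf (nhdsWithin 0 {0}ᶜ) (nhds 0) := by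
    have := (h2.inv₀ one_ne_zero).log (by simp)
    simp only [inv_one, log_one] at this
    refine this.congr (fun x => ?_)
    simp [Lf, div_eq_mul_inv, mul_comm]
  have h4 : ContinuousAt Lf 0 := by
    rw [continuousAt_iff_punctured_nhds, Lf_zero]; exact h3
  exact h4.continuousWithinAt

lemma log_one_sub_exp_lim : Tendsto (fun x : ℝ => log (1 - exp (-x))) atTop (nhds 0) := by
  have := (tendsto_exp_neg_atTop_nhds_zero.const_sub 1).log (by norm_num)
  simpa using this

noncomputable def f1 (x : ℝ) : ℝ := sqrt (1 + x) / x - 1 / sqrt (1 + x) - (exp x - 1)⁻¹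

noncomputable def f2 (x : ℝ) : ℝ := sqrt (1 - x) / x - 1 / sqrt (1 - x) - (exp x - 1)⁻¹

lemma f1_int : IntegrableOn f1 (Set.Ioi 0) ∧ ∫ x in Set.Ioi 0, f1 x = 2 * log 2 := by
  let F : ℝ → ℝ := fun x => Lf x - 2 * log (sqrt (1 + x) + 1)
  have hc : ContinuousWithinAt F (Set.Ici 0) 0 := by
    refine Lf_cont.sub (ContinuousAt.continuousWithinAt ?_)
    refine continuousAt_const.mul (ContinuousAt.log (by fun_prop) (by positivity))
  have hd : ∀ x ∈ Set.Ioi (0:ℝ), HasDerivAt F (f1 x) x := by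
    intro x hx
    have hx : 0 < x := hx
    have hs : 0 < sqrt (1 + x) := sqrt_pos.mpr (by linarith)
    have h1 : HasDerivAt (fun x : ℝ => 1 + x) 1 x := (hasDerivAt_id x).const_add 1
    have h2 := (((h1.sqrt (by linarith)).add_const 1).log (by positivity)).const_mul 2
    refine ((Lf_deriv hx).sub h2).congr_deriv ?_
    unfold f1
    have e : sqrt (1 + x) ^ 2 = 1 + x := sq_sqrt (by linarith)
    set s := sqrt (1 + x)
    have hxs : x = s ^ 2 - 1 := by linarith
    have : s / x - 1 / s = 1 / x - 2 * (1 / (2 * s) / (s + 1)) := by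
      field_simp
      rw [hxs]; ring
    linarith
  have hp : ∀ x ∈ Set.Ioi (0:ℝ), 0 ≤ f1 x := by
    intro x hx
    have hx : 0 < x := hx
    have hs : 0 < sqrt (1 + x) := sqrt_pos.mpr (by linarith)
    have e : sqrt (1 + x) ^ 2 = 1 + x := sq_sqrt (by linarith)
    have hq := quadratic_le_exp_of_nonneg hx.le
    unfold f1
    set s := sqrt (1 + x)
    have : s / x - 1 / s = (x * s)⁻¹ := by
      field_simp
      linarith
    rw [this, sub_nonneg]
    apply inv_anti₀ (by positivity)
    nlinarith [sq_nonneg (s - 1)]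
  have hl : Tendsto F atTop (nhds 0) := by
    have ht : Tendsto (fun x : ℝ => sqrt (1 + x)) atTop atTop :=
      tendsto_sqrt_atTop.comp (tendsto_atTop_add_const_left _ _ tendsto_id)
    have h1 : Tendsto (fun x : ℝ => log (1 - 2 / (sqrt (1 + x) + 1))) atTop (nhds 0) := by
      have := (tendsto_atTop_add_const_right _ (1:ℝ) ht).const_div_atTop 2
      simpa using (this.const_sub 1).log (by norm_num)
    have h2 := h1.sub log_one_sub_exp_lim
    simp only [sub_zero] at h2
    refine h2.congr' ?_
    filter_upwards [eventually_gt_atTop 0] with x hx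
    have h := one_sub_exp_pos hx
    have e : sqrt (1 + x) ^ 2 = 1 + x := sq_sqrt (by linarith)
    have hs : 0 < sqrt (1 + x) := sqrt_pos.mpr (by linarith)
    simp only [F, Lf]
    rw [log_div hx.ne' h.ne']
    have : 1 - 2 / (sqrt (1 + x) + 1) = x / (sqrt (1 + x) + 1) ^ 2 := by
      field_simp
      nlinarith
    rw [this, log_div hx.ne' (by positivity), log_pow]
    push_cast
    ring
  refine ⟨integrableOn_Ioi_deriv_of_nonneg hc hd hp hl, ?_⟩
  rw [integral_Ioi_of_hasDerivAt_of_nonneg hc hd hp hl]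
  simp only [F, Lf_zero]
  norm_num

lemma f2_int : IntegrableOn f2 (Set.Ioi 0) ∧ ∫ x in Set.Ioi 0, f2 x = 2 * log 2 - 4 := by
  let F : ℝ → ℝ := fun x => Lf x - 2 * log (sqrt (1 - x) + 1) + 4 * sqrt (1 - x)
  let G : ℝ → ℝ := fun x => - log (1 - exp (-x))
  have hc : ContinuousOn F (Set.Icc 0 1) := by
    refine (ContinuousOn.sub ?_ ?_).add (by fun_prop)
    · intro x hx
      rcases hx.1.eq_or_lt with rfl | h
      · exact Lf_cont.mono Set.Icc_subset_Ici_self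
      · exact (Lf_deriv h).continuousAt.continuousWithinAt
    · refine continuousOn_const.mul (ContinuousOn.log (by fun_prop) (fun x _ => by positivity))
  have hd : ∀ x ∈ Set.Ioo (0:ℝ) 1, HasDerivAt F (f2 x) x := by
    rintro x ⟨hx, hx1⟩
    have hs : 0 < sqrt (1 - x) := sqrt_pos.mpr (by linarith)
    have h1 : HasDerivAt (fun x : ℝ => 1 - x) (-1) x := (hasDerivAt_id x).const_sub 1
    have h0 := h1.sqrt (by linarith)
    have h2 := ((h0.add_const 1).log (by positivity)).const_mul 2
    refine (((Lf_deriv hx).sub h2).add (h0.const_mul 4)).congr_deriv ?_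
    unfold f2
    have e : sqrt (1 - x) ^ 2 = 1 - x := sq_sqrt (by linarith)
    set s := sqrt (1 - x)
    have hxs : x = 1 - s ^ 2 := by linarith
    have : s / x - 1 / s = 1 / x - 2 * (-1 / (2 * s) / (s + 1)) + 4 * (-1 / (2 * s)) := by
      field_simp
      rw [hxs]; ring
    linarith
  have hp : ∀ x ∈ Set.Ioo (0:ℝ) 1, f2 x ≤ 0 := by
    rintro x ⟨hx, hx1⟩
    have hs : 0 < sqrt (1 - x) := sqrt_pos.mpr (by linarith)
    have e : sqrt (1 - x) ^ 2 = 1 - x := sq_sqrt (by linarith)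
    have h1 := add_one_le_exp x
    have h2 := add_one_le_exp (-x)
    have ee : exp x * exp (-x) = 1 := by rw [← exp_add]; simp
    have hE : 0 < exp x - 1 := by linarith
    have hh : 1 / x - 1 ≤ (exp x - 1)⁻¹ := by
      rw [← one_div, le_div_iff₀ hE]
      have : 1 / x - 1 = (1 - x) / x := by field_simp
      rw [this, div_mul_eq_mul_div, div_le_one hx]
      nlinarith [exp_pos x]
    unfold f2
    set s := sqrt (1 - x)
    have hs1 : s ≤ 1 := by nlinarith
    have a1 : s / x ≤ 1 / x := by gcongr
    have a2 : 1 ≤ 1 / s := by rw [le_div_iff₀ hs]; linarith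
    linarith
  have hi1 : IntegrableOn f2 (Set.Ioc 0 1) := by
    have := intervalIntegral.integrableOn_deriv_of_nonneg hc.neg (fun x hx => (hd x hx).neg)
      (fun x hx => neg_nonneg_of_nonpos (hp x hx))
    exact integrable_neg_iff.1 this
  have hv1 : ∫ x in Set.Ioc 0 1, f2 x = F 1 - F 0 := by
    rw [← intervalIntegral.integral_of_le zero_le_one]
    exact intervalIntegral.integral_eq_sub_of_hasDerivAt_of_le zero_le_one hc hd
      ((intervalIntegrable_iff_integrableOn_Ioc_of_le zero_le_one).mpr hi1)
  have f2e : ∀ x : ℝ, 1 ≤ x → f2 x = - (exp x - 1)⁻¹ := by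
    intro x hx
    unfold f2
    rw [sqrt_eq_zero_of_nonpos (by linarith)]; simp
  have gd : ∀ x ∈ Set.Ici (1:ℝ), HasDerivAt G (f2 x) x := by
    intro x hx
    have hx : 1 ≤ x := hx
    have hx0 : 0 < x := by linarith
    have h := one_sub_exp_pos hx0
    have h1 : HasDerivAt (fun x : ℝ => 1 - exp (-x)) (exp (-x)) x := by
      simpa using ((hasDerivAt_neg x).exp).const_sub 1
    refine (h1.log h.ne').neg.congr_deriv ?_
    rw [f2e x hx, hx_inv hx0]
  have gp : ∀ x ∈ Set.Ioi (1:ℝ), f2 x ≤ 0 := by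
    intro x hx
    have hx : 1 < x := hx
    rw [f2e x hx.le]
    have h1 := add_one_le_exp x
    have : 0 ≤ (exp x - 1)⁻¹ := inv_nonneg.mpr (by linarith)
    linarith
  have gl : Tendsto G atTop (nhds 0) := by simpa using log_one_sub_exp_lim.neg
  have hi2 := integrableOn_Ioi_deriv_of_nonpos' gd gp gl
  have hv2 := integral_Ioi_of_hasDerivAt_of_nonpos' gd gp gl
  rw [← Set.Ioc_union_Ioi_eq_Ioi (zero_le_one' ℝ)]
  refine ⟨hi1.union hi2, ?_⟩
  rw [setIntegral_union (Set.Ioc_disjoint_Ioi le_rfl) measurableSet_Ioi hi1 hi2, hv1, hv2]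
  simp only [F, G, Lf]
  norm_num
  ring

noncomputable def gf (x : ℝ) : ℝ := (1 - exp (-x)) / (1 + exp (-x))

lemma main_est {c A : ℝ} (hc : 1 ≤ c) (w v : ℝ → ℝ) (hw : Measurable w)
    (hw1 : ∀ x, 0 < x → |w x - 1| ≤ x)
    (hi : IntegrableOn (fun x => w x / x - v x - (exp x - 1)⁻¹) (Set.Ioi 0))
    (hA : ∫ x in Set.Ioi 0, (w x / x - v x - (exp x - 1)⁻¹) = A) :
    IntegrableOn (fun x => gf (c * x) * w x / x - v x) (Set.Ioi 0) ∧
    |(∫ x in Set.Ioi 0, (gf (c * x) * w x / x - v x)) -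
      (A + eulerMascheroniConstant + log c + log (2 / π))| ≤ 2 / c := by
  have c0 : 0 < c := by linarith
  let e : ℝ → ℝ := fun x => 2 * exp (-(c * x)) / (1 + exp (-(c * x))) * (w x - 1) / x
  have eb : ∀ x ∈ Set.Ioi (0:ℝ), ‖e x‖ ≤ 2 * exp (-c * x) := by
    intro x hx
    have hx : 0 < x := hx
    have p := exp_pos (-(c * x))
    simp only [e, norm_eq_abs, neg_mul]
    rw [abs_div, abs_mul, abs_of_pos hx, abs_of_pos (by positivity), div_le_iff₀ hx]
    have := hw1 x hx
    have : 2 * exp (-(c * x)) / (1 + exp (-(c * x))) ≤ 2 * exp (-(c * x)) :=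
      div_le_self (by positivity) (by linarith)
    gcongr
  have ei0 : IntegrableOn (fun x => 2 * exp (-c * x)) (Set.Ioi 0) :=
    (exp_neg_integrableOn_Ioi 0 c0).const_mul 2
  have ei : IntegrableOn e (Set.Ioi 0) := by
    refine Integrable.mono' ei0 ?_ ?_
    · exact Measurable.aestronglyMeasurable (by fun_prop)
    · filter_upwards [ae_restrict_mem measurableSet_Ioi] with x hx using eb x hx
  have ev : |∫ x in Set.Ioi 0, e x| ≤ 2 / c := by
    have := norm_integral_le_of_norm_le ei0
      ((ae_restrict_mem measurableSet_Ioi).mono (fun x hx => eb x hx))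
    rw [integral_const_mul, integral_exp_mul_Ioi (by linarith)] at this
    refine this.trans_eq ?_
    simp
    field_simp
  have fr := frul one_pos hc
  have ri : IntegrableOn (fun x => c * rf (c * x)) (Set.Ioi 0) := by
    refine Integrable.const_mul ?_ c
    have := (integrableOn_Ioi_comp_mul_left_iff rf 0 c0).mpr (by simpa using rf_int)
    exact this
  have rv : ∫ x in Set.Ioi 0, c * rf (c * x) = log (2 / π) := by
    rw [integral_const_mul, ← smul_eq_mul, integral_comp_mul_left_Ioi' rf 0 c0, mul_zero, rf_integral]
  have key : Set.EqOn (fun x => gf (c * x) * w x / x - v x)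
      (fun x => (w x / x - v x - (exp x - 1)⁻¹) + qf x +
        (exp (-1 * x) - exp (-c * x)) / x + c * rf (c * x) - e x) (Set.Ioi 0) := by
    intro x hx
    have hx : 0 < x := hx
    have p := exp_pos (-(c * x))
    simp only [gf, qf, rf, e, neg_mul, one_mul]
    field_simp
    ring
  have i1 := int_add_fun hi qf_int
  have i2 := int_add_fun i1 fr.1
  have i3 := int_add_fun i2 ri
  have i4 := int_sub_fun i3 ei
  refine ⟨i4.congr_fun key.symm measurableSet_Ioi, ?_⟩
  rw [setIntegral_congr_fun measurableSet_Ioi key, integral_sub i3 ei, integral_add i2 ri,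
    integral_add i1 fr.1, integral_add hi qf_int, hA, qf_integral, fr.2, rv, div_one]
  rw [← abs_neg]
  convert ev using 2
  ring

noncomputable def KR (T μ r : ℝ) : ℝ :=
  if r ^ 2 = μ then 2 * T
  else (r ^ 2 - μ) * (Real.exp ((r ^ 2 - μ) / T) + 1)
        / (Real.exp ((r ^ 2 - μ) / T) - 1)

noncomputable def rho (T μ r : ℝ) : ℝ := r ^ 2 * (1 / KR T μ r - 1 / r ^ 2)

lemma m_radial (μ T : ℝ) : mμ μ T = (1 / μ) * ∫ r in Set.Ioi 0, rho T μ r := by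
  have h := integral_fun_norm_addHaar (volume : Measure (EuclideanSpace ℝ (Fin 3)))
    (fun r => 1 / KR T μ r - 1 / r ^ 2)
  have h2 : (volume : Measure (EuclideanSpace ℝ (Fin 3))).real (Metric.ball 0 1) = π * 4 / 3 := by
    rw [Measure.real, EuclideanSpace.volume_ball_fin_three]
    simp
    positivity
  rw [h2] at h
  unfold mμ
  have h3 : ∫ p : EuclideanSpace ℝ (Fin 3), (1 / KTmu T μ p - 1 / ‖p‖ ^ 2) =
      ∫ p : EuclideanSpace ℝ (Fin 3), (1 / KR T μ ‖p‖ - 1 / ‖p‖ ^ 2) := rfl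
  rw [h3, h]
  simp only [finrank_euclideanSpace_fin, smul_eq_mul, nsmul_eq_mul]
  have : ∀ r, r ^ (3 - 1) * (1 / KR T μ r - 1 / r ^ 2) = rho T μ r := fun r => rfl
  simp only [this]
  have := pi_pos
  push_cast
  field_simp

lemma rho_pos {T μ x : ℝ} (hT : 0 < T) (hμ : 0 < μ) (hx : 0 < x) :
    rho T μ (√μ * √(1 + x)) = (1 + x) * gf (μ / T * x) / x - 1 := by
  have hr : (√μ * √(1 + x)) ^ 2 = μ * (1 + x) := by
    rw [mul_pow, sq_sqrt hμ.le, sq_sqrt (by linarith)]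
  unfold rho KR gf
  rw [hr, if_neg (by nlinarith [mul_pos hμ hx])]
  have e1 : (μ * (1 + x) - μ) / T = μ / T * x := by ring
  have e2 : μ * (1 + x) - μ = μ * x := by ring
  rw [e1, e2, exp_neg]
  have hy : 0 < μ / T * x := by positivity
  have h1 := add_one_le_exp (μ / T * x)
  set E := exp (μ / T * x)
  have : E - 1 ≠ 0 := by linarith
  have : E + 1 ≠ 0 := by linarith
  have : E ≠ 0 := by linarith
  field_simp

lemma rho_neg {T μ x : ℝ} (hT : 0 < T) (hμ : 0 < μ) (hx : 0 < x) (hx1 : x < 1) :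
    rho T μ (√μ * √(1 - x)) = (1 - x) * gf (μ / T * x) / x - 1 := by
  have hr : (√μ * √(1 - x)) ^ 2 = μ * (1 - x) := by
    rw [mul_pow, sq_sqrt hμ.le, sq_sqrt (by linarith)]
  unfold rho KR gf
  rw [hr, if_neg (by nlinarith [mul_pos hμ hx])]
  have e1 : (μ * (1 - x) - μ) / T = -(μ / T * x) := by ring
  have e2 : μ * (1 - x) - μ = -(μ * x) := by ring
  rw [e1, e2]
  have hy : 0 < μ / T * x := by positivity
  have h1 := one_sub_exp_pos hy
  have h0 := exp_pos (-(μ / T * x))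
  set E := exp (-(μ / T * x))
  have : E - 1 ≠ 0 := by linarith
  have h2 : 1 - x ≠ 0 := by linarith
  have h3 : 1 / (-(μ * x) * (E + 1) / (E - 1)) = (1 - E) / (1 + E) / (μ * x) := by
    have : E + 1 ≠ 0 := by linarith
    have : 1 + E ≠ 0 := by linarith
    field_simp
    ring
  rw [h3]
  field_simp

lemma piece_pos {T μ : ℝ} (hT : 0 < T) (hμ : 0 < μ)
    (hi : IntegrableOn (fun x => gf (μ / T * x) * √(1 + x) / x - 1 / √(1 + x)) (Set.Ioi 0)) :
    IntegrableOn (rho T μ) (Set.Ioi √μ) ∧ ∫ r in Set.Ioi √μ, rho T μ r =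
      √μ / 2 * ∫ x in Set.Ioi 0, (gf (μ / T * x) * √(1 + x) / x - 1 / √(1 + x)) := by
  have hm : 0 < √μ := sqrt_pos.mpr hμ
  have himg : (fun x => √μ * √(1 + x)) '' Set.Ioi 0 = Set.Ioi √μ := by
    ext r
    simp only [Set.mem_image, Set.mem_Ioi]
    constructor
    · rintro ⟨x, hx, rfl⟩
      have : 1 < √(1 + x) := by rw [lt_sqrt (by norm_num)]; linarith
      nlinarith
    · intro hr
      have : 1 < r / √μ := by rwa [lt_div_iff₀ hm, one_mul]
      refine ⟨(r / √μ) ^ 2 - 1, by nlinarith, ?_⟩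
      rw [add_sub_cancel, sqrt_sq (by linarith)]
      field_simp
  have hd : ∀ x ∈ Set.Ioi (0:ℝ), HasDerivWithinAt (fun x => √μ * √(1 + x))
      (√μ * (1 / (2 * √(1 + x)))) (Set.Ioi 0) x := by
    intro x hx
    have hx : 0 < x := hx
    have h1 : HasDerivAt (fun x : ℝ => 1 + x) 1 x := (hasDerivAt_id x).const_add 1
    exact ((h1.sqrt (by linarith)).const_mul _).hasDerivWithinAt
  have hinj : Set.InjOn (fun x => √μ * √(1 + x)) (Set.Ioi 0) := by
    intro x hx y hy hxy
    have hx : 0 < x := hx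
    have hy : 0 < y := hy
    have := mul_left_cancel₀ hm.ne' hxy
    rw [sqrt_inj (by linarith) (by linarith)] at this
    linarith
  have key : Set.EqOn (fun x => √μ / 2 * (gf (μ / T * x) * √(1 + x) / x - 1 / √(1 + x)))
      (fun x => |√μ * (1 / (2 * √(1 + x)))| • rho T μ (√μ * √(1 + x))) (Set.Ioi 0) := by
    intro x hx
    have hx : 0 < x := hx
    have hs : 0 < √(1 + x) := sqrt_pos.mpr (by linarith)
    have e : √(1 + x) ^ 2 = 1 + x := sq_sqrt (by linarith)
    simp only [smul_eq_mul]
    rw [rho_pos hT hμ hx, abs_of_pos (by positivity)]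
    set s := √(1 + x)
    rw [← e]
    field_simp
  constructor
  · rw [← himg, integrableOn_image_iff_integrableOn_abs_deriv_smul measurableSet_Ioi hd hinj]
    exact IntegrableOn.congr_fun (Integrable.const_mul hi (√μ / 2)) key measurableSet_Ioi
  · rw [← himg, integral_image_eq_integral_abs_deriv_smul measurableSet_Ioi hd hinj,
      ← setIntegral_congr_fun measurableSet_Ioi key, integral_const_mul]

lemma piece_neg {T μ : ℝ} (hT : 0 < T) (hμ : 0 < μ)
    (hi : IntegrableOn (fun x => gf (μ / T * x) * √(1 - x) / x - 1 / √(1 - x)) (Set.Ioi 0)) :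
    IntegrableOn (rho T μ) (Set.Ioo 0 √μ) ∧ ∫ r in Set.Ioo 0 √μ, rho T μ r =
      √μ / 2 * ∫ x in Set.Ioi 0, (gf (μ / T * x) * √(1 - x) / x - 1 / √(1 - x)) := by
  have hm : 0 < √μ := sqrt_pos.mpr hμ
  have himg : (fun x => √μ * √(1 - x)) '' Set.Ioo 0 1 = Set.Ioo 0 √μ := by
    ext r
    simp only [Set.mem_image, Set.mem_Ioo]
    constructor
    · rintro ⟨x, ⟨hx, hx1⟩, rfl⟩
      have hs : 0 < √(1 - x) := sqrt_pos.mpr (by linarith)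
      have : √(1 - x) < 1 := by rw [sqrt_lt' (by norm_num)]; linarith
      exact ⟨by positivity, by nlinarith⟩
    · rintro ⟨h0, hr⟩
      have h1 : r / √μ < 1 := by rwa [div_lt_one hm]
      have h2 : 0 < r / √μ := by positivity
      refine ⟨1 - (r / √μ) ^ 2, ⟨by nlinarith, by nlinarith⟩, ?_⟩
      rw [sub_sub_cancel, sqrt_sq (by linarith)]
      field_simp
  have hd : ∀ x ∈ Set.Ioo (0:ℝ) 1, HasDerivWithinAt (fun x => √μ * √(1 - x))
      (√μ * (-1 / (2 * √(1 - x)))) (Set.Ioo 0 1) x := by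
    rintro x ⟨hx, hx1⟩
    have h1 : HasDerivAt (fun x : ℝ => 1 - x) (-1) x := (hasDerivAt_id x).const_sub 1
    exact ((h1.sqrt (by linarith)).const_mul _).hasDerivWithinAt
  have hinj : Set.InjOn (fun x => √μ * √(1 - x)) (Set.Ioo 0 1) := by
    intro x hx y hy hxy
    have := mul_left_cancel₀ hm.ne' hxy
    rw [sqrt_inj (by linarith [hx.2]) (by linarith [hy.2])] at this
    linarith
  have key : Set.EqOn (fun x => √μ / 2 * (gf (μ / T * x) * √(1 - x) / x - 1 / √(1 - x)))
      (fun x => |√μ * (-1 / (2 * √(1 - x)))| • rho T μ (√μ * √(1 - x))) (Set.Ioo 0 1) := by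
    rintro x ⟨hx, hx1⟩
    have hs : 0 < √(1 - x) := sqrt_pos.mpr (by linarith)
    have e : √(1 - x) ^ 2 = 1 - x := sq_sqrt (by linarith)
    simp only [smul_eq_mul]
    rw [rho_neg hT hμ hx hx1, neg_div, mul_neg, abs_neg, abs_of_pos (by positivity)]
    set s := √(1 - x)
    rw [← e]
    field_simp
  constructor
  · rw [← himg, integrableOn_image_iff_integrableOn_abs_deriv_smul measurableSet_Ioo hd hinj]
    exact IntegrableOn.congr_fun
      (Integrable.const_mul (hi.mono_set Set.Ioo_subset_Ioi_self) (√μ / 2)) key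
      measurableSet_Ioo
  · rw [← himg, integral_image_eq_integral_abs_deriv_smul measurableSet_Ioo hd hinj,
      ← setIntegral_congr_fun measurableSet_Ioo key, integral_const_mul]
    congr 1
    refine (setIntegral_eq_of_subset_of_forall_sdiff_eq_zero measurableSet_Ioi
      Set.Ioo_subset_Ioi_self ?_).symm
    rintro x ⟨hx, hx1⟩
    have hx : 0 < x := hx
    have : 1 ≤ x := by
      by_contra h
      exact hx1 ⟨hx, not_le.mp h⟩
    rw [sqrt_eq_zero_of_nonpos (by linarith)]
    simp

lemma m_est {μ T : ℝ} (hμ : 0 < μ) (hT : 0 < T) (hTμ : T ≤ μ) :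
    |mμ μ T - (√μ)⁻¹ * (log (μ / T) + eulerMascheroniConstant - 2 + log (8 / π))|
      ≤ (√μ)⁻¹ * (2 / (μ / T)) := by
  have hm : 0 < √μ := sqrt_pos.mpr hμ
  have hc : 1 ≤ μ / T := by rwa [one_le_div hT]
  have h1 := main_est (A := 2 * log 2) hc (fun x => √(1 + x)) (fun x => 1 / √(1 + x)) (by fun_prop)
    (by
      intro x hx
      have hs : 0 < √(1 + x) := sqrt_pos.mpr (by linarith)
      have e : √(1 + x) ^ 2 = 1 + x := sq_sqrt (by linarith)
      rw [abs_le]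
      constructor <;> nlinarith)
    f1_int.1 f1_int.2
  have h2 := main_est (A := 2 * log 2 - 4) hc (fun x => √(1 - x)) (fun x => 1 / √(1 - x))
    (by fun_prop)
    (by
      intro x hx
      have hs : 0 ≤ √(1 - x) := sqrt_nonneg _
      rw [abs_le]
      rcases le_total x 1 with h | h
      · have e : √(1 - x) ^ 2 = 1 - x := sq_sqrt (by linarith)
        constructor <;> nlinarith
      · rw [sqrt_eq_zero_of_nonpos (by linarith)]
        constructor <;> linarith)
    f2_int.1 f2_int.2
  have p1 := piece_pos hT hμ h1.1
  have p2 := piece_neg hT hμ h2.1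
  have e1 := h1.2
  have e2 := h2.2
  have p2' : IntegrableOn (rho T μ) (Set.Ioc 0 √μ) := by
    rw [integrableOn_Ioc_iff_integrableOn_Ioo]; exact p2.1
  rw [m_radial, ← Set.Ioc_union_Ioi_eq_Ioi hm.le,
    setIntegral_union (Set.Ioc_disjoint_Ioi le_rfl) measurableSet_Ioi p2' p1.1,
    integral_Ioc_eq_integral_Ioo, p1.2, p2.2]
  set I1 := ∫ x in Set.Ioi 0, (gf (μ / T * x) * √(1 + x) / x - 1 / √(1 + x))
  set I2 := ∫ x in Set.Ioi 0, (gf (μ / T * x) * √(1 - x) / x - 1 / √(1 - x))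
  have hl : log (8 / π) = 2 * log 2 + log (2 / π) := by
    have : (8:ℝ) / π = 2 ^ 2 * (2 / π) := by ring
    rw [this, log_mul (by positivity) (by positivity), log_pow]; push_cast; ring
  have hmm : 1 / μ = (√μ)⁻¹ * (√μ)⁻¹ := by
    rw [← mul_inv, mul_self_sqrt hμ.le, one_div]
  have : 1 / μ * (√μ / 2 * I2 + √μ / 2 * I1) -
      (√μ)⁻¹ * (log (μ / T) + eulerMascheroniConstant - 2 + log (8 / π)) =
      (√μ)⁻¹ * (((I1 + I2) / 2) -
        (log (μ / T) + eulerMascheroniConstant - 2 + log (8 / π))) := by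
    rw [hmm]; field_simp; ring
  rw [this, abs_mul, abs_of_pos (inv_pos.mpr hm), hl]
  gcongr
  rw [abs_le] at e1 e2 ⊢
  constructor <;> linarith [e1.1, e1.2, e2.1, e2.2]

theorem stmt_5 (μ : ℝ) (hμ : 0 < μ) :
    Tendsto (fun T : ℝ =>
        mμ μ T - (Real.sqrt μ)⁻¹ *
          (Real.log (μ / T) + Real.eulerMascheroniConstant - 2 + Real.log (8 / Real.pi)))
      (nhdsWithin 0 (Set.Ioi 0)) (nhds 0) := by
  have hlim : Tendsto (fun T : ℝ => (√μ)⁻¹ * (2 / μ * T)) (nhdsWithin 0 (Set.Ioi 0)) (nhds 0) := by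
    have : Continuous (fun T : ℝ => (√μ)⁻¹ * (2 / μ * T)) := by fun_prop
    simpa using (this.tendsto 0).mono_left nhdsWithin_le_nhds
  refine squeeze_zero_norm' ?_ hlim
  filter_upwards [Ioc_mem_nhdsGT hμ] with T hT
  have := m_est hμ hT.1 hT.2
  rw [norm_eq_abs]
  refine this.trans_eq ?_
  have := hT.1
  field_simp
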